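/- For Beurling weights ϑ₁, ϑ₂ on ℝ^d and 1 ≤ p, q, r < ∞, the space A^{p,1,q,r}_{ϑ₁,ϑ₂}(ℝ^d) is complete with respect to the norm ‖f‖_A = ‖f‖_{p1,ϑ₁} + ‖f̂‖_{qr,ϑ₂}, i.e. it is a Banach space. -/

import Mathlib

open MeasureTheory Filter Topology
open scoped ENNReal NNReal BigOperators

noncomputable section

/-- The unit cube `α + [0,1)^d` at the integer point `α ∈ ℤ^d`. -/
def cube {d : ℕ} (α : Fin d → ℤ) : Set (Fin d → ℝ) :=
  Set.univ.pi fun i => Set.Ico (α i : ℝ) ((α i : ℝ) + 1)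

/-- The weighted amalgam norm `‖f‖_{pq,ω}` of the space `(L^p_ω, ℓ^q)`. -/
def amalgamNorm {d : ℕ} (p q : ℝ) (ω : (Fin d → ℝ) → ℝ) (f : (Fin d → ℝ) → ℂ) : ℝ≥0∞ :=
  (∑' α : Fin d → ℤ,
      (eLpNorm (fun x => ω x • f x) (ENNReal.ofReal p) (volume.restrict (cube α))) ^ q) ^ (1 / q)

/-- Membership in the weighted amalgam space `(L^p_ω, ℓ^q)`. -/
def MemAmalgam {d : ℕ} (p q : ℝ) (ω : (Fin d → ℝ) → ℝ) (f : (Fin d → ℝ) → ℂ) : Prop :=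
  Measurable f ∧ amalgamNorm p q ω f < ⊤

/-- A Beurling weight: measurable, `ϑ ≥ 1` and submultiplicative. -/
def IsBeurling {d : ℕ} (ϑ : (Fin d → ℝ) → ℝ) : Prop :=
  Measurable ϑ ∧ (∀ x, 1 ≤ ϑ x) ∧ ∀ x y, ϑ (x + y) ≤ ϑ x * ϑ y

/-- The Fourier transform `f̂(ξ) = ∫ f(x) e^{-2πi⟨x,ξ⟩} dx`. -/
def fourierT {d : ℕ} (f : (Fin d → ℝ) → ℂ) (ξ : Fin d → ℝ) : ℂ :=
  ∫ x : Fin d → ℝ,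
    Complex.exp (-(2 * (Real.pi : ℂ) * Complex.I * ∑ i, (x i : ℂ) * (ξ i : ℂ))) * f x

/-- The norm of `A^{p,1,q,r}_{ϑ₁,ϑ₂}(ℝ^d)`. -/
def ANorm {d : ℕ} (p q r : ℝ) (ϑ₁ ϑ₂ : (Fin d → ℝ) → ℝ) (f : (Fin d → ℝ) → ℂ) : ℝ≥0∞ :=
  amalgamNorm p 1 ϑ₁ f + amalgamNorm q r ϑ₂ (fourierT f)

/-- Membership in `A^{p,1,q,r}_{ϑ₁,ϑ₂}(ℝ^d)`. -/
def MemA {d : ℕ} (p q r : ℝ) (ϑ₁ ϑ₂ : (Fin d → ℝ) → ℝ) (f : (Fin d → ℝ) → ℂ) : Prop :=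
  MemAmalgam p 1 ϑ₁ f ∧ MemAmalgam q r ϑ₂ (fourierT f)

/-- Convolution `(f∗g)(x) = ∫ f(x−t)g(t) dt`. -/
def convF {d : ℕ} (f g : (Fin d → ℝ) → ℂ) (x : Fin d → ℝ) : ℂ :=
  ∫ t : Fin d → ℝ, f (x - t) * g t

/-- `ϑ ≺ ϑ'` : domination of weights up to a constant. -/
def Prec {d : ℕ} (ϑ ϑ' : (Fin d → ℝ) → ℝ) : Prop :=
  ∃ C : ℝ, 0 < C ∧ ∀ x, ϑ x ≤ C * ϑ' x

/-- The Beurling–Domar condition `∑_{n≥1} log ϑ(nx)/n² < ∞`. -/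
def BeurlingDomar {d : ℕ} (ϑ : (Fin d → ℝ) → ℝ) : Prop :=
  ∀ x : Fin d → ℝ, Summable fun n : ℕ => Real.log (ϑ ((n : ℝ) • x)) / (n : ℝ) ^ 2

/-- `w` does not tend to zero as `|x| → ∞`. -/
def NotVanishingAtInfty {d : ℕ} (w : (Fin d → ℝ) → ℝ) : Prop :=
  ∃ δ : ℝ, 0 < δ ∧ ∀ R : ℝ, 0 < R → ∃ x : Fin d → ℝ, R < ‖x‖ ∧ δ ≤ w x

end

/-
The amalgam norm is lower semicontinuous under almost everywhere convergence: this is Fatou's lemma,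
applied on each cube and then to the sum over the cubes. Hence an amalgam-Cauchy sequence with a
subsequence converging almost everywhere to `v` converges to `v` in norm. Since unit cubes have
measure one and `ϑ₁` is bounded below, `(L^p_{ϑ₁}, ℓ¹)` embeds in `L¹`, so a Cauchy sequence in `A`
has an `L¹` limit `g`. It converges to `g` almost everywhere along a subsequence, and its Fourier
transforms converge pointwise to `ĝ`, which identifies both amalgam limits.
-/

section ENNReal

theorem tendsto_zero_of_forall_lt_ofReal {ι : Type*} [Nonempty ι] [SemilatticeSup ι]
    {F : ι × ι → ℝ≥0∞}
    (hF : ∀ ε : ℝ, 0 < ε → ∃ N, ∀ m n, N ≤ m → N ≤ n → F (m, n) < ENNReal.ofReal ε) :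
    Tendsto F atTop (𝓝 0) := by
  refine ENNReal.tendsto_atTop_zero.2 fun ε hε ↦ ?_
  obtain ⟨δ, -, hδ, hδε⟩ := ENNReal.lt_iff_exists_real_btwn.1 hε
  obtain ⟨N, hN⟩ := hF δ (ENNReal.ofReal_pos.1 hδ)
  exact ⟨(N, N), fun k hk ↦ (hN k.1 k.2 hk.1 hk.2).le.trans hδε.le⟩

theorem rpow_liminf {ι : Type*} {l : Filter ι} {s : ℝ} (hs : 0 < s) (a : ι → ℝ≥0∞) :
    liminf a l ^ s = liminf (fun i ↦ a i ^ s) l :=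
  (ENNReal.orderIsoRpow s hs).liminf_apply

theorem tsum_liminf_le_liminf_tsum {ι : Type*} (a : ℕ → ι → ℝ≥0∞) :
    ∑' i, liminf (fun n ↦ a n i) atTop ≤ liminf (fun n ↦ ∑' i, a n i) atTop := by
  let : MeasurableSpace ι := ⊤
  simp only [← lintegral_count]
  exact lintegral_liminf_le fun _ ↦ measurable_from_top

end ENNReal

theorem exists_measurable_tendsto_eLpNorm_sub {α E : Type*} [MeasurableSpace α] {μ : Measure α}
    [NormedAddCommGroup E] [CompleteSpace E] [MeasurableSpace E] [BorelSpace E] {p : ℝ≥0∞}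
    [Fact (1 ≤ p)] {f : ℕ → α → E} (hf : ∀ n, MemLp (f n) p μ)
    (hcau : Tendsto (fun k : ℕ × ℕ ↦ eLpNorm (f k.1 - f k.2) p μ) atTop (𝓝 0)) :
    ∃ g, Measurable g ∧ MemLp g p μ ∧ Tendsto (fun n ↦ eLpNorm (f n - g) p μ) atTop (𝓝 0) := by
  have hcauLp : CauchySeq fun n ↦ (hf n).toLp (f n) := by
    rw [Lp.cauchySeq_Lp_iff_cauchySeq_eLpNorm]
    exact hcau.congr fun k ↦
      eLpNorm_congr_ae ((hf k.1).coeFn_toLp.sub (hf k.2).coeFn_toLp).symm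
  obtain ⟨G, hG⟩ := cauchySeq_tendsto_of_complete hcauLp
  refine ⟨G, (Lp.stronglyMeasurable G).measurable, Lp.memLp G, ?_⟩
  rwa [← Lp.tendsto_Lp_iff_tendsto_eLpNorm'' f hf G (Lp.memLp G), Lp.toLp_coeFn]

section Cube

variable {d : ℕ}

theorem measurableSet_cube (α : Fin d → ℤ) : MeasurableSet (cube α) :=
  MeasurableSet.univ_pi fun _ ↦ measurableSet_Ico

theorem mem_cube_iff {α : Fin d → ℤ} {x : Fin d → ℝ} : x ∈ cube α ↔ (fun i ↦ ⌊x i⌋) = α := by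
  simp only [cube, Set.mem_univ_pi, Set.mem_Ico, funext_iff, Int.floor_eq_iff]

theorem iUnion_cube : ⋃ α : Fin d → ℤ, cube α = Set.univ :=
  Set.eq_univ_of_forall fun _ ↦ Set.mem_iUnion.2 ⟨_, mem_cube_iff.2 rfl⟩

theorem pairwise_disjoint_cube : Pairwise (Function.onFun Disjoint (cube (d := d))) :=
  fun _ _ hne ↦ Set.disjoint_left.2 fun _ hα hβ ↦
    hne ((mem_cube_iff.1 hα).symm.trans (mem_cube_iff.1 hβ))

instance isProbabilityMeasure_restrict_cube (α : Fin d → ℤ) :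
    IsProbabilityMeasure (volume.restrict (cube α)) :=
  ⟨by simp [cube, Real.volume_Ico, volume_pi_pi]⟩

theorem lintegral_eq_tsum_cube (F : (Fin d → ℝ) → ℝ≥0∞) :
    ∫⁻ x, F x = ∑' α : Fin d → ℤ, ∫⁻ x in cube α, F x := by
  rw [← lintegral_iUnion measurableSet_cube pairwise_disjoint_cube, iUnion_cube,
    Measure.restrict_univ]

end Cube

section Amalgam

variable {d : ℕ} {p q c : ℝ} {ω : (Fin d → ℝ) → ℝ} {u v : (Fin d → ℝ) → ℂ}

/-- The local norm `‖f·ω‖_{L^p(α+[0,1)^d)}`: the amalgam norm is the `ℓ^q` norm of the family of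
local norms over `α ∈ ℤ^d`. -/
noncomputable def localNorm (p : ℝ) (ω : (Fin d → ℝ) → ℝ) (f : (Fin d → ℝ) → ℂ)
    (α : Fin d → ℤ) : ℝ≥0∞ :=
  eLpNorm (fun x ↦ ω x • f x) (ENNReal.ofReal p) (volume.restrict (cube α))

theorem amalgamNorm_eq_tsum_localNorm (p q : ℝ) (ω : (Fin d → ℝ) → ℝ) (f : (Fin d → ℝ) → ℂ) :
    amalgamNorm p q ω f = (∑' α, localNorm p ω f α ^ q) ^ (1 / q) :=
  rfl

theorem amalgamNorm_lt_top_iff (hq : 0 < q) :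
    amalgamNorm p q ω u < ⊤ ↔ ∑' α, localNorm p ω u α ^ q < ⊤ :=
  ENNReal.rpow_lt_top_iff_of_pos (one_div_pos.2 hq)

theorem localNorm_le_liminf (hω : Measurable ω) {f : ℕ → (Fin d → ℝ) → ℂ}
    (hf : ∀ n, Measurable (f n)) (hlim : ∀ᵐ x, Tendsto (f · x) atTop (𝓝 (v x)))
    (α : Fin d → ℤ) :
    localNorm p ω v α ≤ liminf (fun n ↦ localNorm p ω (f n) α) atTop :=
  Lp.eLpNorm_lim_le_liminf_eLpNorm (fun n ↦ (hω.smul (hf n)).aestronglyMeasurable) _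
    ((ae_restrict_of_ae hlim).mono fun x hx ↦ hx.const_smul (ω x))

theorem amalgamNorm_le_liminf (hq : 0 < q) (hω : Measurable ω) {f : ℕ → (Fin d → ℝ) → ℂ}
    (hf : ∀ n, Measurable (f n)) (hlim : ∀ᵐ x, Tendsto (f · x) atTop (𝓝 (v x))) :
    amalgamNorm p q ω v ≤ liminf (fun n ↦ amalgamNorm p q ω (f n)) atTop := by
  simp only [amalgamNorm_eq_tsum_localNorm]
  calc (∑' α, localNorm p ω v α ^ q) ^ (1 / q)
      ≤ (∑' α, liminf (fun n ↦ localNorm p ω (f n) α) atTop ^ q) ^ (1 / q) := by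
        gcongr with α
        exact localNorm_le_liminf hω hf hlim α
    _ = (∑' α, liminf (fun n ↦ localNorm p ω (f n) α ^ q) atTop) ^ (1 / q) := by
        simp only [rpow_liminf hq]
    _ ≤ liminf (fun n ↦ ∑' α, localNorm p ω (f n) α ^ q) atTop ^ (1 / q) := by
        gcongr
        exact tsum_liminf_le_liminf_tsum _
    _ = liminf (fun n ↦ (∑' α, localNorm p ω (f n) α ^ q) ^ (1 / q)) atTop :=
        rpow_liminf (one_div_pos.2 hq) _

theorem localNorm_sub_le (hω : Measurable ω) (hu : Measurable u) (hv : Measurable v)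
    (α : Fin d → ℤ) :
    localNorm p ω (u - v) α ≤
      ENNReal.LpAddConst (ENNReal.ofReal p) * (localNorm p ω u α + localNorm p ω v α) := by
  simp only [localNorm, Pi.sub_apply, smul_sub]
  exact eLpNorm_sub_le' (hω.smul hu).aestronglyMeasurable (hω.smul hv).aestronglyMeasurable _

theorem MemAmalgam.sub (hq : 0 < q) (hω : Measurable ω) (hu : MemAmalgam p q ω u)
    (hv : MemAmalgam p q ω v) : MemAmalgam p q ω (u - v) := by
  refine ⟨hu.1.sub hv.1, (amalgamNorm_lt_top_iff hq).2 ?_⟩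
  set K := ENNReal.LpAddConst (ENNReal.ofReal p)
  set M := ENNReal.LpAddConst (ENNReal.ofReal q)⁻¹
  have hK : K ^ q < ⊤ := ENNReal.rpow_lt_top_of_nonneg hq.le (ENNReal.LpAddConst_lt_top _).ne
  have hM : M < ⊤ := ENNReal.LpAddConst_lt_top _
  have hlocal α : localNorm p ω (u - v) α ^ q ≤
      K ^ q * (M * (localNorm p ω u α ^ q + localNorm p ω v α ^ q)) :=
    calc localNorm p ω (u - v) α ^ q
        ≤ (K * (localNorm p ω u α + localNorm p ω v α)) ^ q :=
          ENNReal.rpow_le_rpow (localNorm_sub_le hω hu.1 hv.1 α) hq.le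
      _ = K ^ q * (localNorm p ω u α + localNorm p ω v α) ^ q :=
          ENNReal.mul_rpow_of_nonneg _ _ hq.le
      _ ≤ K ^ q * (M * (localNorm p ω u α ^ q + localNorm p ω v α ^ q)) := by
          gcongr
          exact ENNReal.rpow_add_le_mul_rpow_add_rpow' _ _ hq.le
  calc ∑' α, localNorm p ω (u - v) α ^ q
      ≤ ∑' α, K ^ q * (M * (localNorm p ω u α ^ q + localNorm p ω v α ^ q)) :=
        ENNReal.tsum_le_tsum hlocal
    _ = K ^ q * (M * (∑' α, localNorm p ω u α ^ q + ∑' α, localNorm p ω v α ^ q)) := by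
        rw [ENNReal.tsum_mul_left, ENNReal.tsum_mul_left, ENNReal.tsum_add]
    _ < ⊤ := ENNReal.mul_lt_top hK <| ENNReal.mul_lt_top hM <| ENNReal.add_lt_top.2
        ⟨(amalgamNorm_lt_top_iff hq).1 hu.2, (amalgamNorm_lt_top_iff hq).1 hv.2⟩

theorem tendsto_amalgamNorm_sub_of_cauchy (hq : 0 < q) (hω : Measurable ω)
    {f : ℕ → (Fin d → ℝ) → ℂ} (hf : ∀ n, Measurable (f n))
    (hcau : Tendsto (fun k : ℕ × ℕ ↦ amalgamNorm p q ω (f k.1 - f k.2)) atTop (𝓝 0))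
    {φ : ℕ → ℕ} (hφ : Tendsto φ atTop atTop)
    (hlim : ∀ᵐ x, Tendsto (fun k ↦ f (φ k) x) atTop (𝓝 (v x))) :
    Tendsto (fun n ↦ amalgamNorm p q ω (f n - v)) atTop (𝓝 0) := by
  refine ENNReal.tendsto_atTop_zero.2 fun ε hε ↦ ?_
  obtain ⟨⟨M, N⟩, hMN⟩ := ENNReal.tendsto_atTop_zero.1 hcau ε hε
  refine ⟨M, fun n hn ↦ ?_⟩
  have hev : ∀ᶠ k in atTop, amalgamNorm p q ω (f n - f (φ k)) ≤ ε :=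
    (hφ.eventually_ge_atTop N).mono fun k hk ↦ hMN (n, φ k) ⟨hn, hk⟩
  calc amalgamNorm p q ω (f n - v)
      ≤ liminf (fun k ↦ amalgamNorm p q ω (f n - f (φ k))) atTop :=
        amalgamNorm_le_liminf hq hω (fun k ↦ (hf n).sub (hf (φ k)))
          (hlim.mono fun x hx ↦ hx.const_sub (f n x))
    _ ≤ ε := liminf_le_of_frequently_le' hev.frequently

theorem MemAmalgam.of_tendsto (hq : 0 < q) (hω : Measurable ω) {f : ℕ → (Fin d → ℝ) → ℂ}
    (hf : ∀ n, MemAmalgam p q ω (f n)) (hv : Measurable v)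
    (hlim : Tendsto (fun n ↦ amalgamNorm p q ω (f n - v)) atTop (𝓝 0)) :
    MemAmalgam p q ω v := by
  obtain ⟨n, hn⟩ := (hlim.eventually_lt_const ENNReal.zero_lt_top).exists
  simpa only [sub_sub_cancel] using (hf n).sub hq hω ⟨(hf n).1.sub hv, hn⟩

theorem eLpNorm_one_smul_le_amalgamNorm (hp : 1 ≤ p)
    (hωu : AEStronglyMeasurable (fun x ↦ ω x • u x)) :
    eLpNorm (fun x ↦ ω x • u x) 1 ≤ amalgamNorm p 1 ω u := by
  simp only [amalgamNorm_eq_tsum_localNorm, ENNReal.rpow_one, div_one]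
  rw [eLpNorm_one_eq_lintegral_enorm, lintegral_eq_tsum_cube]
  gcongr with α
  rw [← eLpNorm_one_eq_lintegral_enorm]
  exact eLpNorm_le_eLpNorm_of_exponent_le (ENNReal.one_le_ofReal.2 hp) hωu.restrict

theorem eLpNorm_one_le_amalgamNorm (hp : 1 ≤ p) (hω : Measurable ω) (hc : 0 < c)
    (hcω : ∀ x, c ≤ ω x) (hu : Measurable u) :
    eLpNorm u 1 ≤ ENNReal.ofReal c⁻¹ * amalgamNorm p 1 ω u := by
  have hpointwise x : ‖u x‖ ≤ c⁻¹ * ‖ω x • u x‖ := by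
    rw [norm_smul, inv_mul_eq_div, le_div_iff₀' hc]
    gcongr
    exact (hcω x).trans (le_abs_self _)
  calc eLpNorm u 1 volume
      ≤ ENNReal.ofReal c⁻¹ * eLpNorm (fun x ↦ ω x • u x) 1 volume :=
        eLpNorm_le_mul_eLpNorm_of_ae_le_mul (.of_forall hpointwise) 1
    _ ≤ ENNReal.ofReal c⁻¹ * amalgamNorm p 1 ω u :=
        mul_le_mul' le_rfl
          (eLpNorm_one_smul_le_amalgamNorm hp (hω.smul hu).aestronglyMeasurable)

theorem MemAmalgam.memLp_one (hp : 1 ≤ p) (hω : Measurable ω) (hc : 0 < c)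
    (hcω : ∀ x, c ≤ ω x) (hu : MemAmalgam p 1 ω u) : MemLp u 1 :=
  ⟨hu.1.aestronglyMeasurable, (eLpNorm_one_le_amalgamNorm hp hω hc hcω hu.1).trans_lt
    (ENNReal.mul_lt_top ENNReal.ofReal_lt_top hu.2)⟩

theorem tendsto_eLpNorm_one_of_tendsto_amalgamNorm {ι : Type*} {l : Filter ι} (hp : 1 ≤ p)
    (hω : Measurable ω) (hc : 0 < c) (hcω : ∀ x, c ≤ ω x) {f : ι → (Fin d → ℝ) → ℂ}
    (hf : ∀ i, Measurable (f i)) (hlim : Tendsto (fun i ↦ amalgamNorm p 1 ω (f i)) l (𝓝 0)) :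
    Tendsto (fun i ↦ eLpNorm (f i) 1) l (𝓝 0) := by
  have hmul := ENNReal.Tendsto.const_mul hlim (.inr (ENNReal.ofReal_ne_top (r := c⁻¹)))
  rw [mul_zero] at hmul
  exact tendsto_nhds_bot_mono' hmul fun i ↦ eLpNorm_one_le_amalgamNorm hp hω hc hcω (hf i)

end Amalgam

section Fourier

variable {d : ℕ} {f g : (Fin d → ℝ) → ℂ}

theorem fourierT_eq_fourierIntegral (f : (Fin d → ℝ) → ℂ) :
    fourierT f =
      VectorFourier.fourierIntegral Real.fourierChar volume (dotProductBilin ℝ ℝ) f := by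
  ext ξ
  refine integral_congr_ae (.of_forall fun x ↦ ?_)
  simp only [Circle.smul_def, Real.fourierChar_apply, dotProductBilin_apply_apply, dotProduct,
    smul_eq_mul]
  push_cast
  ring_nf

theorem continuous_dotProductBilin :
    Continuous fun z : (Fin d → ℝ) × (Fin d → ℝ) ↦ dotProductBilin ℝ ℝ z.1 z.2 := by
  simp only [dotProductBilin_apply_apply, dotProduct]
  fun_prop

theorem continuous_fourierT (hf : Integrable f) : Continuous (fourierT f) := by
  rw [fourierT_eq_fourierIntegral]
  exact VectorFourier.fourierIntegral_continuous Real.continuous_fourierChar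
    continuous_dotProductBilin hf

theorem fourierT_sub (hf : Integrable f) (hg : Integrable g) :
    fourierT (f - g) = fourierT f - fourierT g := by
  rw [eq_sub_iff_add_eq]
  simp only [fourierT_eq_fourierIntegral]
  rw [← VectorFourier.fourierIntegral_add Real.continuous_fourierChar continuous_dotProductBilin
    (hf.sub hg) hg, sub_add_cancel]

theorem enorm_fourierT_le_eLpNorm_one (f : (Fin d → ℝ) → ℂ) (ξ : Fin d → ℝ) :
    ‖fourierT f ξ‖ₑ ≤ eLpNorm f 1 := by
  rw [fourierT_eq_fourierIntegral, eLpNorm_one_eq_lintegral_enorm]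
  refine (enorm_integral_le_lintegral_enorm _).trans_eq (lintegral_congr fun x ↦ ?_)
  rw [← ofReal_norm, Circle.norm_smul, ofReal_norm]

theorem tendsto_fourierT {f : ℕ → (Fin d → ℝ) → ℂ} (hf : ∀ n, Integrable (f n))
    (hg : Integrable g) (hlim : Tendsto (fun n ↦ eLpNorm (f n - g) 1) atTop (𝓝 0))
    (ξ : Fin d → ℝ) : Tendsto (fun n ↦ fourierT (f n) ξ) atTop (𝓝 (fourierT g ξ)) := by
  refine tendsto_iff_enorm_sub_tendsto_zero.2 (tendsto_nhds_bot_mono' hlim fun n ↦ ?_)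
  rw [← Pi.sub_apply, ← fourierT_sub (hf n) hg]
  exact enorm_fourierT_le_eLpNorm_one _ ξ

end Fourier

theorem memA_and_tendsto_ANorm_sub_of_cauchy {d : ℕ} {p q r : ℝ} (hr : 0 < r)
    {ϑ₁ ϑ₂ : (Fin d → ℝ) → ℝ} (hϑ₁ : Measurable ϑ₁) (hϑ₂ : Measurable ϑ₂)
    {f : ℕ → (Fin d → ℝ) → ℂ} (hf : ∀ n, MemA p q r ϑ₁ ϑ₂ (f n)) (hfL1 : ∀ n, MemLp (f n) 1)
    (hcau : Tendsto (fun k : ℕ × ℕ ↦ ANorm p q r ϑ₁ ϑ₂ (f k.1 - f k.2)) atTop (𝓝 0))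
    {g : (Fin d → ℝ) → ℂ} (hgm : Measurable g) (hgL1 : MemLp g 1)
    (hlimL1 : Tendsto (fun n ↦ eLpNorm (f n - g) 1) atTop (𝓝 0)) :
    MemA p q r ϑ₁ ϑ₂ g ∧ Tendsto (fun n ↦ ANorm p q r ϑ₁ ϑ₂ (f n - g)) atTop (𝓝 0) := by
  have hint n : Integrable (f n) := memLp_one_iff_integrable.1 (hfL1 n)
  have hgint : Integrable g := memLp_one_iff_integrable.1 hgL1
  simp only [ANorm, fourierT_sub (hint _) (hint _)] at hcau
  simp only [ANorm, fourierT_sub (hint _) hgint]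
  obtain ⟨φ, hφ, hae⟩ := (tendstoInMeasure_of_tendsto_eLpNorm one_ne_zero
    (fun n ↦ (hfL1 n).1) hgL1.1 hlimL1).exists_seq_tendsto_ae
  have hlim₁ : Tendsto (fun n ↦ amalgamNorm p 1 ϑ₁ (f n - g)) atTop (𝓝 0) :=
    tendsto_amalgamNorm_sub_of_cauchy one_pos hϑ₁ (fun n ↦ (hf n).1.1)
      (tendsto_nhds_bot_mono' hcau fun _ ↦ le_self_add) hφ.tendsto_atTop hae
  have hlim₂ : Tendsto (fun n ↦ amalgamNorm q r ϑ₂ (fourierT (f n) - fourierT g)) atTop (𝓝 0) :=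
    tendsto_amalgamNorm_sub_of_cauchy hr hϑ₂ (fun n ↦ (hf n).2.1)
      (tendsto_nhds_bot_mono' hcau fun _ ↦ le_add_self) tendsto_id
      (.of_forall (tendsto_fourierT hint hgint hlimL1))
  refine ⟨⟨.of_tendsto one_pos hϑ₁ (fun n ↦ (hf n).1) hgm hlim₁,
    .of_tendsto hr hϑ₂ (fun n ↦ (hf n).2) (continuous_fourierT hgint).measurable hlim₂⟩, ?_⟩
  simpa only [add_zero] using hlim₁.add hlim₂

theorem A_complete_general {d : ℕ} (p q r : ℝ) (hp : 1 ≤ p) (_hq : 0 < q) (hr : 0 < r)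
    (ϑ₁ ϑ₂ : (Fin d → ℝ) → ℝ) (hϑ₁ : Measurable ϑ₁) (hϑ₂ : Measurable ϑ₂)
    {c : ℝ} (hc : 0 < c) (hcϑ₁ : ∀ x, c ≤ ϑ₁ x)
    (f : ℕ → (Fin d → ℝ) → ℂ) (hf : ∀ n, MemA p q r ϑ₁ ϑ₂ (f n))
    (hcau : ∀ ε : ℝ, 0 < ε → ∃ N : ℕ, ∀ m n : ℕ, N ≤ m → N ≤ n →
      ANorm p q r ϑ₁ ϑ₂ (fun x ↦ f m x - f n x) < ENNReal.ofReal ε) :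
    ∃ g : (Fin d → ℝ) → ℂ, MemA p q r ϑ₁ ϑ₂ g ∧
      Tendsto (fun n ↦ ANorm p q r ϑ₁ ϑ₂ (fun x ↦ f n x - g x)) atTop (𝓝 0) := by
  have hfL1 n : MemLp (f n) 1 := (hf n).1.memLp_one hp hϑ₁ hc hcϑ₁
  have hcauA : Tendsto (fun k : ℕ × ℕ ↦ ANorm p q r ϑ₁ ϑ₂ (f k.1 - f k.2)) atTop (𝓝 0) :=
    tendsto_zero_of_forall_lt_ofReal hcau
  have hcauL1 : Tendsto (fun k : ℕ × ℕ ↦ eLpNorm (f k.1 - f k.2) 1) atTop (𝓝 0) :=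
    tendsto_eLpNorm_one_of_tendsto_amalgamNorm hp hϑ₁ hc hcϑ₁
      (fun k ↦ (hf k.1).1.1.sub (hf k.2).1.1)
      (tendsto_nhds_bot_mono' hcauA fun _ ↦ le_self_add)
  obtain ⟨g, hgm, hgL1, hlimL1⟩ := exists_measurable_tendsto_eLpNorm_sub hfL1 hcauL1
  exact ⟨g, memA_and_tendsto_ANorm_sub_of_cauchy hr hϑ₁ hϑ₂ hf hfL1 hcauA hgm hgL1 hlimL1⟩

/-- `A^{p,1,q,r}_{ϑ₁,ϑ₂}(ℝ^d)` is complete, i.e. a Banach space. -/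
theorem A_complete {d : ℕ} (p q r : ℝ) (hp : 1 ≤ p) (hq : 1 ≤ q) (hr : 1 ≤ r)
    (ϑ₁ ϑ₂ : (Fin d → ℝ) → ℝ) (h1 : IsBeurling ϑ₁) (h2 : IsBeurling ϑ₂)
    (f : ℕ → (Fin d → ℝ) → ℂ) (hf : ∀ n, MemA p q r ϑ₁ ϑ₂ (f n))
    (hcau : ∀ ε : ℝ, 0 < ε → ∃ N : ℕ, ∀ m n : ℕ, N ≤ m → N ≤ n →
      ANorm p q r ϑ₁ ϑ₂ (fun x => f m x - f n x) < ENNReal.ofReal ε) :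
    ∃ g : (Fin d → ℝ) → ℂ, MemA p q r ϑ₁ ϑ₂ g ∧
      Tendsto (fun n => ANorm p q r ϑ₁ ϑ₂ (fun x => f n x - g x)) atTop (nhds 0) :=
  A_complete_general p q r hp (one_pos.trans_le hq) (one_pos.trans_le hr) ϑ₁ ϑ₂ h1.1 h2.1 one_pos
    h1.2.1 f hf hcau
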